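/- arXiv:1603.04944 — 5 statements merged into one kernel-verified Lean document; each statement's English description precedes it below -/
import Mathlib

section
/- Let Φ and φ be real numbers and let 𝕎 : ℝ → ℝ vanish on (−∞,0) and be continuous on [0,∞). Define f(t) = 𝕎(−t) + (Φ−φ)·∫_t^0 e^{−Φ(t−z)}·𝕎(−z) dz for t ≤ 0. Then for every x ≤ 0: ∫_x^0 e^{−φ(x−z)}·f(z) dz = ∫_x^0 e^{−Φ(x−z)}·𝕎(−z) dz. -/
open MeasureTheory Real Set Filter

/- Let `T c` be the operator `(T c g) x = ∫ z in x..b, e^{-c (x - z)} g z`. Fubini's theorem on a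
triangle reduces the composition `T φ ∘ T Φ` to the elementary convolution of two exponentials,
which gives the resolvent identity `(Φ - φ) T φ (T Φ g) = T Φ g - T φ g`. Since
`f = g + (Φ - φ) T Φ g` with `g z = 𝕎 (-z)` and `b = 0`, applying `T φ` to `f` leaves `T Φ g`. -/

section Fubini

variable {E : Type*} [NormedAddCommGroup E] [NormedSpace ℝ E]
  {μ : Measure ℝ} [SFinite μ] [NullSingletonClass μ] {a b : ℝ} {F : ℝ → ℝ → E}

theorem integral_integral_swap_triangle_of_le (hab : a ≤ b)
    (hF : IntegrableOn (Function.uncurry F) (Ioc a b ×ˢ Ioc a b) (μ.prod μ)) :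
    ∫ z in a..b, ∫ w in z..b, F z w ∂μ ∂μ = ∫ w in a..b, ∫ z in a..w, F z w ∂μ ∂μ := by
  let G : ℝ → ℝ → E := fun z w ↦ {p : ℝ × ℝ | p.1 < p.2}.indicator (Function.uncurry F) (z, w)
  have hG : Integrable (Function.uncurry G)
      ((μ.restrict (Ioc a b)).prod (μ.restrict (Ioc a b))) := by
    rw [Measure.prod_restrict]
    exact hF.indicator (measurableSet_lt measurable_fst measurable_snd)
  have integral_right : ∀ z ∈ Ioc a b, ∫ w in z..b, F z w ∂μ = ∫ w in Ioc a b, G z w ∂μ := by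
    intro z hz
    have hGz : G z = (Ioi z).indicator (F z) := rfl
    rw [intervalIntegral.integral_of_le hz.2, hGz, setIntegral_indicator measurableSet_Ioi,
      Ioc_inter_Ioi, sup_eq_right.2 hz.1.le]
  have integral_left : ∀ w ∈ Ioc a b, ∫ z in a..w, F z w ∂μ = ∫ z in Ioc a b, G z w ∂μ := by
    intro w hw
    have hGw : (G · w) = (Iio w).indicator (F · w) := rfl
    have hinter : Ioc a b ∩ Iio w = Ioo a w := by
      ext z
      exact ⟨fun h ↦ ⟨h.1.1, h.2⟩, fun h ↦ ⟨⟨h.1, h.2.le.trans hw.2⟩, h.2⟩⟩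
    rw [intervalIntegral.integral_of_le hw.1.le, hGw, setIntegral_indicator measurableSet_Iio,
      hinter, integral_Ioc_eq_integral_Ioo]
  rw [intervalIntegral.integral_of_le hab, intervalIntegral.integral_of_le hab,
    setIntegral_congr_fun measurableSet_Ioc integral_right,
    setIntegral_congr_fun measurableSet_Ioc integral_left]
  exact integral_integral_swap hG

theorem integral_integral_swap_triangle
    (hF : IntegrableOn (Function.uncurry F) (uIoc a b ×ˢ uIoc a b) (μ.prod μ)) :
    ∫ z in a..b, ∫ w in z..b, F z w ∂μ ∂μ = ∫ w in a..b, ∫ z in a..w, F z w ∂μ ∂μ := by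
  rcases le_total a b with hab | hba
  · rw [uIoc_of_le hab] at hF
    exact integral_integral_swap_triangle_of_le hab hF
  · rw [uIoc_of_ge hba] at hF
    calc ∫ z in a..b, ∫ w in z..b, F z w ∂μ ∂μ
        = ∫ z in b..a, ∫ w in b..z, F z w ∂μ ∂μ := by
          simp only [intervalIntegral.integral_symm b, intervalIntegral.integral_neg, neg_neg]
      _ = ∫ w in b..a, ∫ z in w..a, F z w ∂μ ∂μ :=
          (integral_integral_swap_triangle_of_le (F := fun w z ↦ F z w) hba hF.swap).symm
      _ = ∫ w in a..b, ∫ z in a..w, F z w ∂μ ∂μ := by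
          simp only [intervalIntegral.integral_symm a, intervalIntegral.integral_neg, neg_neg]

end Fubini

theorem sub_mul_integral_exp_mul_exp (Φ φ a w : ℝ) :
    (Φ - φ) * ∫ z in a..w, exp (-φ * (a - z)) * exp (-Φ * (z - w))
      = exp (-Φ * (a - w)) - exp (-φ * (a - w)) := by
  have hderiv : ∀ z, HasDerivAt (fun z ↦ -(exp (-φ * (a - z)) * exp (-Φ * (z - w))))
      ((Φ - φ) * (exp (-φ * (a - z)) * exp (-Φ * (z - w)))) z := by
    intro z
    have hφ : HasDerivAt (fun z ↦ exp (-φ * (a - z))) (exp (-φ * (a - z)) * (-φ * -1)) z :=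
      (((hasDerivAt_id z).const_sub a).const_mul (-φ)).exp
    have hΦ : HasDerivAt (fun z ↦ exp (-Φ * (z - w))) (exp (-Φ * (z - w)) * (-Φ * 1)) z :=
      (((hasDerivAt_id z).sub_const w).const_mul (-Φ)).exp
    exact (hφ.mul hΦ).neg.congr_deriv (by ring)
  rw [← intervalIntegral.integral_const_mul,
    intervalIntegral.integral_eq_sub_of_hasDerivAt (fun z _ ↦ hderiv z)
      (Continuous.intervalIntegrable (by fun_prop) _ _)]
  simp only [sub_self, mul_zero, exp_zero, mul_one, one_mul]
  ring

section ExpVolterra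

variable {E : Type*} [NormedAddCommGroup E] [NormedSpace ℝ E]

/-- The Volterra operator with kernel `e^{-c (x - z)}` and fixed upper endpoint `b`; for continuous
`g`, the function `u = expVolterra c b g` solves `u' = -c u - g`, `u b = 0`. Both sides of `stmt6`
are values of such functions, with `b = 0`. -/
noncomputable def expVolterra (c b : ℝ) (g : ℝ → E) (x : ℝ) : E :=
  ∫ z in x..b, exp (-c * (x - z)) • g z

variable {a b : ℝ} {g h : ℝ → E}

theorem expVolterra_congr (c : ℝ) (hgh : EqOn g h (uIcc a b)) :
    expVolterra c b g a = expVolterra c b h a :=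
  intervalIntegral.integral_congr fun z hz ↦ congrArg (exp (-c * (a - z)) • ·) (hgh hz)

theorem intervalIntegrable_exp_smul (c : ℝ) (hg : IntervalIntegrable g volume a b) (x : ℝ) :
    IntervalIntegrable (fun z ↦ exp (-c * (x - z)) • g z) volume a b :=
  hg.continuousOn_smul (by fun_prop)

theorem expVolterra_add (c : ℝ) (hg : IntervalIntegrable g volume a b)
    (hh : IntervalIntegrable h volume a b) :
    expVolterra c b (g + h) a = expVolterra c b g a + expVolterra c b h a := by
  simp only [expVolterra, Pi.add_apply, smul_add]
  exact intervalIntegral.integral_add (intervalIntegrable_exp_smul c hg a)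
    (intervalIntegrable_exp_smul c hh a)

theorem expVolterra_const_smul (c r : ℝ) (g : ℝ → E) (x : ℝ) :
    expVolterra c b (r • g) x = r • expVolterra c b g x := by
  simp only [expVolterra, Pi.smul_apply, smul_comm _ r, intervalIntegral.integral_smul]

theorem continuousOn_expVolterra (c : ℝ) (hg : IntervalIntegrable g volume a b) :
    ContinuousOn (expVolterra c b g) (uIcc a b) := by
  have hfactor : expVolterra c b g
      = fun x ↦ exp (-c * x) • ∫ z in x..b, exp (-c * (0 - z)) • g z := by
    funext x
    simp only [expVolterra, ← intervalIntegral.integral_smul, smul_smul, ← exp_add]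
    ring_nf
  have hprimitive : ContinuousOn (fun x ↦ ∫ z in x..b, exp (-c * (0 - z)) • g z) (uIcc a b) := by
    simp only [intervalIntegral.integral_symm b]
    exact (intervalIntegral.continuousOn_primitive_interval'
      (intervalIntegrable_exp_smul c hg 0) right_mem_uIcc).neg
  rw [hfactor]
  exact ContinuousOn.smul (by fun_prop) hprimitive

variable [CompleteSpace E]

theorem expVolterra_expVolterra (Φ φ : ℝ) (hg : IntervalIntegrable g volume a b) :
    expVolterra φ b (expVolterra Φ b g) a
      = ∫ w in a..b, (∫ z in a..w, exp (-φ * (a - z)) * exp (-Φ * (z - w))) • g w := by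
  have hF : IntegrableOn
      (Function.uncurry fun z w ↦ (exp (-φ * (a - z)) * exp (-Φ * (z - w))) • g w)
      (uIoc a b ×ˢ uIoc a b) (volume.prod volume) := by
    have hg_snd : IntegrableOn (fun p : ℝ × ℝ ↦ g p.2)
        (uIoc a b ×ˢ uIoc a b) (volume.prod volume) := by
      rw [IntegrableOn, ← Measure.prod_restrict]
      have : IsFiniteMeasure (volume.restrict (uIoc a b)) :=
        inferInstanceAs (IsFiniteMeasure (volume.restrict (Ioc _ _)))
      exact hg.def'.comp_snd _
    exact hg_snd.continuousOn_smul_of_subset (by fun_prop) (isCompact_uIcc.prod isCompact_uIcc)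
      (measurableSet_uIoc.prod measurableSet_uIoc) (prod_mono uIoc_subset_uIcc uIoc_subset_uIcc)
  calc expVolterra φ b (expVolterra Φ b g) a
      = ∫ z in a..b, ∫ w in z..b, (exp (-φ * (a - z)) * exp (-Φ * (z - w))) • g w := by
        simp only [expVolterra, ← intervalIntegral.integral_smul, smul_smul]
    _ = ∫ w in a..b, ∫ z in a..w, (exp (-φ * (a - z)) * exp (-Φ * (z - w))) • g w :=
        integral_integral_swap_triangle hF
    _ = ∫ w in a..b, (∫ z in a..w, exp (-φ * (a - z)) * exp (-Φ * (z - w))) • g w := by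
        simp only [intervalIntegral.integral_smul_const]

theorem expVolterra_resolvent_identity (Φ φ : ℝ) (hg : IntervalIntegrable g volume a b) :
    (Φ - φ) • expVolterra φ b (expVolterra Φ b g) a
      = expVolterra Φ b g a - expVolterra φ b g a := by
  rw [expVolterra_expVolterra Φ φ hg, ← intervalIntegral.integral_smul]
  simp only [smul_smul, sub_mul_integral_exp_mul_exp, sub_smul]
  exact intervalIntegral.integral_sub (intervalIntegrable_exp_smul Φ hg a)
    (intervalIntegrable_exp_smul φ hg a)

theorem expVolterra_add_smul_expVolterra (Φ φ : ℝ) (hg : IntervalIntegrable g volume a b) :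
    expVolterra φ b (g + (Φ - φ) • expVolterra Φ b g) a = expVolterra Φ b g a := by
  have hT : IntervalIntegrable ((Φ - φ) • expVolterra Φ b g) volume a b :=
    ((continuousOn_expVolterra Φ hg).const_smul (Φ - φ)).intervalIntegrable
  rw [expVolterra_add φ hg hT, expVolterra_const_smul, expVolterra_resolvent_identity Φ φ hg,
    add_sub_cancel]

end ExpVolterra

theorem intervalIntegrable_comp_neg_of_locallyIntegrableOn {E : Type*} [NormedAddCommGroup E]
    {g : ℝ → E} (hg : LocallyIntegrableOn g (Ici 0)) {x : ℝ} (hx : x ≤ 0) :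
    IntervalIntegrable (fun z ↦ g (-z)) volume x 0 := by
  rw [IntervalIntegrable.iff_comp_neg]
  simp only [neg_neg, neg_zero]
  refine (hg.integrableOn_compact_subset ?_ isCompact_uIcc).intervalIntegrable
  rw [uIcc_of_ge (neg_nonneg.2 hx)]
  exact Icc_subset_Ici_self

theorem stmt6_general {E : Type*} [NormedAddCommGroup E] [NormedSpace ℝ E] [CompleteSpace E]
    (Φ φ : ℝ) (𝕎 : ℝ → E) (h𝕎 : LocallyIntegrableOn 𝕎 (Ici 0)) (f : ℝ → E)
    (hf : ∀ t ≤ (0 : ℝ),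
      f t = 𝕎 (-t) + (Φ - φ) • ∫ z in t..(0 : ℝ), exp (-Φ * (t - z)) • 𝕎 (-z)) :
    ∀ x ≤ (0 : ℝ),
      ∫ z in x..(0 : ℝ), exp (-φ * (x - z)) • f z
        = ∫ z in x..(0 : ℝ), exp (-Φ * (x - z)) • 𝕎 (-z) := by
  intro x hx
  let g : ℝ → E := fun z ↦ 𝕎 (-z)
  have hg : IntervalIntegrable g volume x 0 :=
    intervalIntegrable_comp_neg_of_locallyIntegrableOn h𝕎 hx
  have hfg : EqOn f (g + (Φ - φ) • expVolterra Φ 0 g) (uIcc x 0) := fun z hz ↦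
    hf z (uIcc_of_le hx ▸ hz).2
  exact (expVolterra_congr φ hfg).trans (expVolterra_add_smul_expVolterra Φ φ hg)

/-- Identity (3.6) of the paper. -/
theorem stmt6 (Φ φ : ℝ) (𝕎 : ℝ → ℝ)
    (h𝕎0 : ∀ u < (0 : ℝ), 𝕎 u = 0)
    (h𝕎c : ContinuousOn 𝕎 (Set.Ici (0 : ℝ)))
    (f : ℝ → ℝ)
    (hf : ∀ t ≤ (0 : ℝ),
      f t = 𝕎 (-t) + (Φ - φ) * ∫ z in t..(0 : ℝ), Real.exp (-Φ * (t - z)) * 𝕎 (-z)) :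
    ∀ x ≤ (0 : ℝ),
      ∫ z in x..(0 : ℝ), Real.exp (-φ * (x - z)) * f z
        = ∫ z in x..(0 : ℝ), Real.exp (-Φ * (x - z)) * 𝕎 (-z) :=
  stmt6_general Φ φ 𝕎 (h𝕎c.locallyIntegrableOn measurableSet_Ici) f hf
end

section
/- Let q, δ > 0 and 0 < Φ < φ be real numbers, let 𝕎 : ℝ → ℝ vanish on (−∞,0) and be continuous on [0,∞), define f(t) = 𝕎(−t) + (Φ−φ)·∫_t^0 e^{−Φ(t−z)}·𝕎(−z) dz for t ≤ 0, and define k : ℝ → ℝ by k(z) = (q(φ−Φ)/(φδ))·e^{−Φz} for z ≥ 0 and k(z) = (q(φ−Φ)/(φδ))·e^{−Φz} − (qΦ/φ)·f(z) for z < 0. Then for all reals b, x, y with b ≤ y < x: (φ/Φ)·k(y−x) + ∫_{b−x}^{y−x} (φ(Φ−φ)/Φ)·e^{−φ(y−x−z)}·k(z) dz = −q·𝕎(x−y) + (q(φ−Φ)/(δΦ))·e^{φ(b−y)}·e^{Φ(x−b)}·( 1 + δΦ·∫_{b−x}^0 e^{Φz}·𝕎(−z) dz ). -/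
open MeasureTheory Real Set Filter

/-!
Put `Z(t) = 1 + δΦ ∫_t^0 e^{Φz} 𝕎(-z) dz`. Almost everywhere,
`k(z) = (q / (φδ)) e^{-φz} (d/dz) (e^{(φ-Φ)z} Z(z))`,
and `Z = 1` on the positive half-line, so that this single formula covers both branches of `k`.
Integrating `e^{φz} k(z)` therefore leaves two boundary terms: the one at `y - x` cancels the
`Z`-part of `(φ/Φ) k(y - x)`, and the one at `b - x` is the right-hand side.
-/

theorem integral_eq_sub_of_absolutelyContinuousOnInterval {F F' : ℝ → ℝ} {a b : ℝ}
    (hF : AbsolutelyContinuousOnInterval F a b) (hF' : ∀ᵐ x, HasDerivAt F (F' x) x) :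
    ∫ x in a..b, F' x = F b - F a := by
  rw [← hF.integral_deriv_eq_sub]
  refine intervalIntegral.integral_congr_ae ?_
  filter_upwards [hF'] with x hx _ using hx.deriv.symm

theorem absolutelyContinuousOnInterval_integral_of_locallyIntegrable {g : ℝ → ℝ}
    (hg : LocallyIntegrable g) (a b c : ℝ) :
    AbsolutelyContinuousOnInterval (fun x ↦ ∫ t in c..x, g t) a b := by
  have hc : c ∈ uIcc (min (min a b) c) (max (max a b) c) := by grind [mem_uIcc]
  have hab : uIcc a b ⊆ uIcc (min (min a b) c) (max (max a b) c) := by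
    intro x hx
    grind [mem_uIcc]
  have hg_int : IntervalIntegrable g volume (min (min a b) c) (max (max a b) c) :=
    (hg.integrableOn_isCompact isCompact_uIcc).intervalIntegrable
  exact (hg_int.absolutelyContinuousOnInterval_intervalIntegral hc).mono hab

theorem locallyIntegrable_of_forall_notMem_eq_zero {X E : Type*} [TopologicalSpace X]
    [T2Space X] [LocallyCompactSpace X] [MeasurableSpace X] [OpensMeasurableSpace X]
    [NormedAddCommGroup E] {μ : Measure X} {g : X → E} {s : Set X} (hs : IsClosed s)
    (hg : LocallyIntegrableOn g s μ) (hg₀ : ∀ x ∉ s, g x = 0) : LocallyIntegrable g μ := by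
  refine locallyIntegrable_iff.2 fun K hK ↦ ?_
  have hKs : IntegrableOn g (K ∩ s) μ :=
    hg.integrableOn_compact_subset inter_subset_right (hK.inter_right hs)
  exact hKs.of_forall_sdiff_eq_zero hK.measurableSet fun x hx ↦ hg₀ x fun hxs ↦ hx.2 ⟨hx.1, hxs⟩

theorem locallyIntegrable_exp_mul_comp_neg {W : ℝ → ℝ} (hW : LocallyIntegrable W) (Φ : ℝ) :
    LocallyIntegrable fun z ↦ exp (Φ * z) * W (-z) := by
  have hW_neg : LocallyIntegrable fun z ↦ W (-z) := by
    refine (locallyIntegrable_map_homeomorph (Homeomorph.neg ℝ)).1 ?_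
    rwa [Homeomorph.coe_neg, Measure.map_neg_eq_self]
  have hexp : Continuous fun z ↦ exp (Φ * z) := by fun_prop
  exact hW_neg.continuous_smul hexp

theorem integral_exp_neg_mul_sub_mul (c t a b : ℝ) (h : ℝ → ℝ) :
    ∫ z in a..b, exp (-c * (t - z)) * h z = exp (-c * t) * ∫ z in a..b, exp (c * z) * h z := by
  rw [← intervalIntegral.integral_const_mul]
  refine intervalIntegral.integral_congr fun z _ ↦ ?_
  simp only [← mul_assoc, ← exp_add]
  ring_nf

/-- The exponentially tilted second scale function, read on the negative half-line:
if `Z(x, Φ) = e^{Φx} (1 + κ ∫_0^x e^{-Φu} W(u) du)` is the generalised second scale function, then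
`tiltedScale κ Φ W t = e^{Φt} Z(-t, Φ)`. -/
noncomputable def tiltedScale (κ Φ : ℝ) (W : ℝ → ℝ) (t : ℝ) : ℝ :=
  1 + κ * ∫ z in t..0, exp (Φ * z) * W (-z)

section TiltedScale

variable {W : ℝ → ℝ}

theorem tiltedScale_eq_one_sub (κ Φ : ℝ) :
    tiltedScale κ Φ W = fun t ↦ 1 - κ * ∫ z in (0 : ℝ)..t, exp (Φ * z) * W (-z) := by
  funext t
  rw [tiltedScale, intervalIntegral.integral_symm, mul_neg, sub_eq_add_neg]

theorem tiltedScale_of_nonneg (hW₀ : ∀ u < 0, W u = 0) (κ Φ : ℝ) {t : ℝ} (ht : 0 ≤ t) :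
    tiltedScale κ Φ W t = 1 := by
  have hint : ∫ z in (0 : ℝ)..t, exp (Φ * z) * W (-z) = 0 := by
    refine intervalIntegral.integral_zero_ae (.of_forall fun z hz ↦ ?_)
    rw [uIoc_of_le ht] at hz
    rw [hW₀ (-z) (neg_neg_of_pos hz.1), mul_zero]
  simp only [tiltedScale_eq_one_sub, hint, mul_zero, sub_zero]

theorem absolutelyContinuousOnInterval_tiltedScale (hW : LocallyIntegrable W) (κ Φ a b : ℝ) :
    AbsolutelyContinuousOnInterval (tiltedScale κ Φ W) a b := by
  have hconst : AbsolutelyContinuousOnInterval (fun _ ↦ (1 : ℝ)) a b :=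
    contDiffOn_const.absolutelyContinuousOnInterval
  rw [tiltedScale_eq_one_sub]
  exact hconst.fun_sub ((absolutelyContinuousOnInterval_integral_of_locallyIntegrable
    (locallyIntegrable_exp_mul_comp_neg hW Φ) a b 0).const_mul κ)

theorem ae_hasDerivAt_tiltedScale (hW : LocallyIntegrable W) (κ Φ : ℝ) :
    ∀ᵐ z, HasDerivAt (tiltedScale κ Φ W) (-(κ * (exp (Φ * z) * W (-z)))) z := by
  rw [tiltedScale_eq_one_sub]
  filter_upwards [LocallyIntegrable.ae_hasDerivAt_integral
    (locallyIntegrable_exp_mul_comp_neg hW Φ)] with z hz using ((hz 0).const_mul κ).const_sub 1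

theorem integral_exp_mul_tiltedScale (hW : LocallyIntegrable W) (κ Φ c a b : ℝ) :
    ∫ z in a..b, exp (c * z) * (c * tiltedScale κ Φ W z - κ * (exp (Φ * z) * W (-z))) =
      exp (c * b) * tiltedScale κ Φ W b - exp (c * a) * tiltedScale κ Φ W a := by
  have hexp : AbsolutelyContinuousOnInterval (fun z ↦ exp (c * z)) a b :=
    ContDiffOn.absolutelyContinuousOnInterval (by fun_prop)
  refine integral_eq_sub_of_absolutelyContinuousOnInterval
    (hexp.fun_mul (absolutelyContinuousOnInterval_tiltedScale hW κ Φ a b)) ?_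
  filter_upwards [ae_hasDerivAt_tiltedScale hW κ Φ] with z hz
  exact (((hasDerivAt_id z).const_mul c).exp.fun_mul hz).congr_deriv (by simp only [id]; ring)

end TiltedScale

/-- The density `k` of the convolution measure `K_q`. The tilted scale function with `κ = δΦ` merges
the two branches of `k` into one formula, valid off the origin. -/
noncomputable def convolutionDensity (q δ Φ φ : ℝ) (W : ℝ → ℝ) (z : ℝ) : ℝ :=
  q / (φ * δ) * ((φ - Φ) * exp (-Φ * z) * tiltedScale (δ * Φ) Φ W z - δ * Φ * W (-z))

section ConvolutionDensity

variable {q δ Φ φ : ℝ} {W : ℝ → ℝ}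

theorem convolutionDensity_of_pos (hW₀ : ∀ u < 0, W u = 0) {z : ℝ} (hz : 0 < z) :
    convolutionDensity q δ Φ φ W z = q * (φ - Φ) / (φ * δ) * exp (-Φ * z) := by
  rw [convolutionDensity, tiltedScale_of_nonneg hW₀ _ _ hz.le, hW₀ (-z) (neg_neg_of_pos hz)]
  ring

theorem convolutionDensity_eq_sub (hδ : δ ≠ 0) (z : ℝ) :
    convolutionDensity q δ Φ φ W z = q * (φ - Φ) / (φ * δ) * exp (-Φ * z) - q * Φ / φ *
      (W (-z) + (Φ - φ) * ∫ u in z..0, exp (-Φ * (z - u)) * W (-u)) := by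
  have hcancel : q / (φ * δ) * δ = q / φ := by field_simp
  rw [convolutionDensity, tiltedScale, integral_exp_neg_mul_sub_mul]
  linear_combination
    Φ * ((φ - Φ) * exp (-Φ * z) * (∫ u in z..0, exp (Φ * u) * W (-u)) - W (-z)) * hcancel

theorem integral_exp_mul_convolutionDensity (hW : LocallyIntegrable W) (a s : ℝ) :
    ∫ z in a..s, exp (φ * z) * convolutionDensity q δ Φ φ W z =
      q / (φ * δ) * (exp ((φ - Φ) * s) * tiltedScale (δ * Φ) Φ W s -
        exp ((φ - Φ) * a) * tiltedScale (δ * Φ) Φ W a) := by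
  rw [← integral_exp_mul_tiltedScale hW, ← intervalIntegral.integral_const_mul]
  refine intervalIntegral.integral_congr fun z _ ↦ ?_
  have hexp : exp (φ * z) * exp (-Φ * z) = exp ((φ - Φ) * z) := by
    rw [← exp_add]
    ring_nf
  have hexp' : exp ((φ - Φ) * z) * exp (Φ * z) = exp (φ * z) := by
    rw [← exp_add]
    ring_nf
  simp only [convolutionDensity]
  linear_combination q / (φ * δ) * (φ - Φ) * tiltedScale (δ * Φ) Φ W z * hexp +
    q / (φ * δ) * δ * Φ * W (-z) * hexp'

theorem mul_convolutionDensity_add_integral (hδ : δ ≠ 0) (hΦ : Φ ≠ 0) (hφ : φ ≠ 0)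
    (hW : LocallyIntegrable W) (a s : ℝ) :
    φ / Φ * convolutionDensity q δ Φ φ W s +
        ∫ z in a..s, φ * (Φ - φ) / Φ * exp (-φ * (s - z)) * convolutionDensity q δ Φ φ W z =
      -q * W (-s) + q * (φ - Φ) / (δ * Φ) * exp (-φ * s) * exp ((φ - Φ) * a) *
        tiltedScale (δ * Φ) Φ W a := by
  have hexp : exp (-φ * s) * exp ((φ - Φ) * s) = exp (-Φ * s) := by
    rw [← exp_add]
    ring_nf
  have hcancel_φ : φ / Φ * (q / (φ * δ)) = q / (δ * Φ) := by field_simp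
  have hcancel_δΦ : q / (δ * Φ) * (δ * Φ) = q := by field_simp
  simp only [mul_assoc (φ * (Φ - φ) / Φ), intervalIntegral.integral_const_mul]
  rw [integral_exp_neg_mul_sub_mul, integral_exp_mul_convolutionDensity hW, convolutionDensity]
  linear_combination
    ((φ - Φ) * exp (-Φ * s) * tiltedScale (δ * Φ) Φ W s - δ * Φ * W (-s) -
      (φ - Φ) * exp (-φ * s) * (exp ((φ - Φ) * s) * tiltedScale (δ * Φ) Φ W s -
        exp ((φ - Φ) * a) * tiltedScale (δ * Φ) Φ W a)) * hcancel_φ -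
    W (-s) * hcancel_δΦ - q / (δ * Φ) * (φ - Φ) * tiltedScale (δ * Φ) Φ W s * hexp

end ConvolutionDensity

theorem stmt9_general (q : ℝ) {δ Φ φ : ℝ} (hδ : δ ≠ 0) (hΦ : Φ ≠ 0) (hφ : φ ≠ 0)
    {𝕎 : ℝ → ℝ} (h𝕎₀ : ∀ u < 0, 𝕎 u = 0) (h𝕎 : LocallyIntegrableOn 𝕎 (Ici 0))
    {f : ℝ → ℝ}
    (hf : ∀ t < 0, f t = 𝕎 (-t) + (Φ - φ) * ∫ z in t..0, exp (-Φ * (t - z)) * 𝕎 (-z))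
    {k : ℝ → ℝ} (hk_pos : ∀ z > 0, k z = q * (φ - Φ) / (φ * δ) * exp (-Φ * z))
    (hk_neg : ∀ z < 0, k z = q * (φ - Φ) / (φ * δ) * exp (-Φ * z) - q * Φ / φ * f z)
    (b : ℝ) {x y : ℝ} (hxy : y ≠ x) :
    φ / Φ * k (y - x) + ∫ z in (b - x)..(y - x),
        φ * (Φ - φ) / Φ * exp (-φ * (y - x - z)) * k z =
      -q * 𝕎 (x - y) + q * (φ - Φ) / (δ * Φ) * exp (φ * (b - y)) * exp (Φ * (x - b)) *
        (1 + δ * Φ * ∫ z in (b - x)..0, exp (Φ * z) * 𝕎 (-z)) := by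
  have hk : ∀ z ≠ 0, k z = convolutionDensity q δ Φ φ 𝕎 z := by
    intro z hz
    rcases hz.lt_or_gt with hz | hz
    · rw [hk_neg z hz, hf z hz, convolutionDensity_eq_sub hδ]
    · rw [hk_pos z hz, convolutionDensity_of_pos h𝕎₀ hz]
  have hint : ∫ z in (b - x)..(y - x), φ * (Φ - φ) / Φ * exp (-φ * (y - x - z)) * k z =
      ∫ z in (b - x)..(y - x),
        φ * (Φ - φ) / Φ * exp (-φ * (y - x - z)) * convolutionDensity q δ Φ φ 𝕎 z := by
    refine intervalIntegral.integral_congr_ae ?_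
    filter_upwards [Measure.ae_ne volume 0] with z hz _
    rw [hk z hz]
  have h𝕎_loc : LocallyIntegrable 𝕎 := locallyIntegrable_of_forall_notMem_eq_zero isClosed_Ici h𝕎
    fun u hu ↦ h𝕎₀ u (not_le.1 hu)
  have hexp : exp (φ * (b - y)) * exp (Φ * (x - b)) =
      exp (-φ * (y - x)) * exp ((φ - Φ) * (b - x)) := by
    rw [← exp_add, ← exp_add]
    ring_nf
  rw [hint, hk _ (sub_ne_zero.2 hxy),
    mul_convolutionDensity_add_integral hδ hΦ hφ h𝕎_loc, neg_sub, tiltedScale]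
  linear_combination (-(q * (φ - Φ) / (δ * Φ)) *
    (1 + δ * Φ * ∫ z in (b - x)..0, exp (Φ * z) * 𝕎 (-z))) * hexp

/-- Identity (3.10) of the paper: the case `b ≤ y < x`. -/
theorem stmt9 (q δ Φ φ : ℝ) (hq : 0 < q) (hδ : 0 < δ) (hΦ : 0 < Φ) (hΦφ : Φ < φ)
    (𝕎 : ℝ → ℝ)
    (h𝕎0 : ∀ u < (0 : ℝ), 𝕎 u = 0)
    (h𝕎c : ContinuousOn 𝕎 (Set.Ici (0 : ℝ)))
    (f : ℝ → ℝ)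
    (hf : ∀ t ≤ (0 : ℝ),
      f t = 𝕎 (-t) + (Φ - φ) * ∫ z in t..(0 : ℝ), Real.exp (-Φ * (t - z)) * 𝕎 (-z))
    (k : ℝ → ℝ)
    (hk₁ : ∀ z : ℝ, 0 ≤ z → k z = (q * (φ - Φ) / (φ * δ)) * Real.exp (-Φ * z))
    (hk₂ : ∀ z : ℝ, z < 0 →
      k z = (q * (φ - Φ) / (φ * δ)) * Real.exp (-Φ * z) - (q * Φ / φ) * f z) :
    ∀ b x y : ℝ, b ≤ y → y < x →
      (φ / Φ) * k (y - x)
        + ∫ z in (b - x)..(y - x),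
            (φ * (Φ - φ) / Φ) * Real.exp (-φ * (y - x - z)) * k z
        = -q * 𝕎 (x - y)
            + (q * (φ - Φ) / (δ * Φ)) * Real.exp (φ * (b - y)) * Real.exp (Φ * (x - b))
              * (1 + δ * Φ * ∫ z in (b - x)..(0 : ℝ), Real.exp (Φ * z) * 𝕎 (-z)) := by
  intro b x y _ hyx
  exact stmt9_general q hδ.ne' hΦ.ne' (hΦ.trans hΦφ).ne' h𝕎0
    (h𝕎c.locallyIntegrableOn measurableSet_Ici) (fun t ht ↦ hf t ht.le) (fun z hz ↦ hk₁ z hz.le)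
    hk₂ b hyx.ne
end

section
/- Let Φ and φ be real numbers with Φ ≠ φ, let a < 0, and let g : ℝ → ℝ be measurable, vanish on (−∞,0), and satisfy ∫_0^∞ e^{−φu}·|g(u)| du < ∞. Then ∫_a^0 e^{Φt}·( ∫_{−∞}^t e^{−φ(t−z)}·g(−z) dz ) dt = (1/(Φ−φ))·( ∫_{−∞}^0 e^{φz}·g(−z) dz − ∫_a^0 e^{Φz}·g(−z) dz − e^{Φa}·∫_{−∞}^a e^{−φ(a−z)}·g(−z) dz ). -/
open MeasureTheory Real Set Filter

/-!
Factoring `e^{-φt}` out of the inner integral turns the left-hand side into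
`∫ e^{(Φ-φ)t} H(t) dt`, where `H(t) = ∫_{-∞}^t e^{φz} g(-z) dz` is absolutely continuous with
`H'(z) = e^{φz} g(-z)` almost everywhere. The identity is integration by parts against the
primitive `e^{(Φ-φ)t} / (Φ-φ)`.
-/

lemma setIntegral_Iic_add_intervalIntegral {E : Type*} [NormedAddCommGroup E] [NormedSpace ℝ E]
    {μ : Measure ℝ} {f : ℝ → E} {a b : ℝ} (ha : IntegrableOn f (Iic a) μ)
    (hb : IntegrableOn f (Iic b) μ) :
    (∫ x in Iic a, f x ∂μ) + ∫ x in a..b, f x ∂μ = ∫ x in Iic b, f x ∂μ := by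
  rw [← intervalIntegral.integral_Iic_sub_Iic ha hb, add_sub_cancel]

section Primitive

variable {a b : ℝ} {h : ℝ → ℝ}

lemma integral_deriv_mul_setIntegral_Iic {u : ℝ → ℝ} (hu : AbsolutelyContinuousOnInterval u a b)
    (hh : IntegrableOn h (Iic (max a b))) :
    ∫ t in a..b, deriv u t * ∫ z in Iic t, h z
      = u b * (∫ z in Iic b, h z) - u a * (∫ z in Iic a, h z) - ∫ z in a..b, u z * h z := by
  set H : ℝ → ℝ := fun t => (∫ z in Iic a, h z) + ∫ z in a..t, h z
  have hH_eq : ∀ t ∈ uIcc a b, H t = ∫ z in Iic t, h z := fun t ht =>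
    setIntegral_Iic_add_intervalIntegral (hh.mono_set (Iic_subset_Iic.mpr (le_max_left a b)))
      (hh.mono_set (Iic_subset_Iic.mpr ht.2))
  have hhab : IntervalIntegrable h volume a b :=
    intervalIntegrable_iff.mpr (hh.mono_set fun _ hz => hz.2)
  have hH : AbsolutelyContinuousOnInterval H a b :=
    contDiffOn_const.absolutelyContinuousOnInterval.add
      (hhab.absolutelyContinuousOnInterval_intervalIntegral left_mem_uIcc)
  have hH_deriv : ∀ᵐ z, z ∈ uIoc a b → u z * deriv H z = u z * h z := by
    filter_upwards [hhab.ae_hasDerivAt_integral] with z hz hzab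
    rw [((hz (uIoc_subset_uIcc hzab) a left_mem_uIcc).const_add _).deriv]
  calc ∫ t in a..b, deriv u t * ∫ z in Iic t, h z
      = ∫ t in a..b, deriv u t * H t :=
        intervalIntegral.integral_congr fun t ht => by simp only [hH_eq t ht]
    _ = u b * H b - u a * H a - ∫ z in a..b, u z * deriv H z := by
        rw [hu.integral_mul_deriv_eq_deriv_mul hH, sub_sub_cancel]
    _ = u b * (∫ z in Iic b, h z) - u a * (∫ z in Iic a, h z) - ∫ z in a..b, u z * h z := by
        rw [intervalIntegral.integral_congr_ae hH_deriv, hH_eq b right_mem_uIcc,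
          hH_eq a left_mem_uIcc]

lemma mul_integral_exp_mul_setIntegral_Iic (c : ℝ) (hh : IntegrableOn h (Iic (max a b))) :
    c * ∫ t in a..b, exp (c * t) * ∫ z in Iic t, h z
      = exp (c * b) * (∫ z in Iic b, h z) - exp (c * a) * (∫ z in Iic a, h z)
        - ∫ z in a..b, exp (c * z) * h z := by
  have hexp : ContDiff ℝ 1 fun t => exp (c * t) := by fun_prop
  have hderiv (t : ℝ) : deriv (fun t => exp (c * t)) t = c * exp (c * t) := by
    simpa [mul_comm] using ((hasDerivAt_id t).const_mul c).exp.deriv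
  rw [← integral_deriv_mul_setIntegral_Iic hexp.contDiffOn.absolutelyContinuousOnInterval hh,
    ← intervalIntegral.integral_const_mul]
  simp only [hderiv, mul_assoc]

end Primitive

lemma exp_sub_mul_mul_exp_mul_mul (Φ φ t x : ℝ) :
    exp ((Φ - φ) * t) * (exp (φ * t) * x) = exp (Φ * t) * x := by
  rw [← mul_assoc, ← exp_add, sub_mul, sub_add_cancel]

lemma exp_mul_setIntegral_exp_sub (Φ φ t : ℝ) (s : Set ℝ) (f : ℝ → ℝ) :
    exp (Φ * t) * ∫ z in s, exp (-φ * (t - z)) * f z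
      = exp ((Φ - φ) * t) * ∫ z in s, exp (φ * z) * f z := by
  have hsplit (z : ℝ) : exp (-φ * (t - z)) * f z = exp (-φ * t) * (exp (φ * z) * f z) := by
    rw [← mul_assoc, ← exp_add]
    ring_nf
  simp only [hsplit, integral_const_mul]
  rw [← mul_assoc, ← exp_add]
  ring_nf

lemma integrableOn_Iic_exp_mul_comp_neg {φ b : ℝ} {g : ℝ → ℝ}
    (hg : IntegrableOn (fun u => exp (-φ * u) * g u) (Ioi (-b))) :
    IntegrableOn (fun z => exp (φ * z) * g (-z)) (Iic b) := by
  rw [integrableOn_Iic_iff_integrableOn_Iio]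
  simpa only [neg_mul_neg] using hg.comp_neg_Iio

lemma integrableOn_exp_mul_of_exp_mul_abs {c : ℝ} {g : ℝ → ℝ} {s : Set ℝ}
    (hgm : AEStronglyMeasurable g (volume.restrict s))
    (hg : IntegrableOn (fun u => exp (c * u) * |g u|) s) :
    IntegrableOn (fun u => exp (c * u) * g u) s := by
  have hexp : Continuous fun u => exp (c * u) := by fun_prop
  refine hg.mono' (hexp.aestronglyMeasurable.mul hgm) (.of_forall fun u => ?_)
  rw [norm_mul, norm_of_nonneg (exp_pos _).le, norm_eq_abs]

theorem stmt10_general {Φ φ : ℝ} (hne : Φ ≠ φ) {a b : ℝ} {g : ℝ → ℝ}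
    (hg : IntegrableOn (fun u => exp (-φ * u) * g u) (Ioi (-max a b))) :
    ∫ t in a..b, exp (Φ * t) * ∫ z in Iic t, exp (-φ * (t - z)) * g (-z)
      = (1 / (Φ - φ)) *
          (exp (Φ * b) * (∫ z in Iic b, exp (-φ * (b - z)) * g (-z))
            - (∫ z in a..b, exp (Φ * z) * g (-z))
            - exp (Φ * a) * ∫ z in Iic a, exp (-φ * (a - z)) * g (-z)) := by
  simp only [exp_mul_setIntegral_exp_sub _ _ _ _ fun z => g (-z)]
  have hparts := mul_integral_exp_mul_setIntegral_Iic (Φ - φ)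
    (integrableOn_Iic_exp_mul_comp_neg hg)
  simp only [exp_sub_mul_mul_exp_mul_mul] at hparts
  rw [sub_right_comm, ← hparts, one_div, inv_mul_cancel_left₀ (sub_ne_zero.mpr hne)]

/-- Exchange-of-integration identity (4.2) of the paper (with `a = y - b`). -/
theorem stmt10 (Φ φ : ℝ) (hne : Φ ≠ φ) (a : ℝ) (ha : a < 0)
    (g : ℝ → ℝ) (hgm : Measurable g)
    (hg0 : ∀ u < (0 : ℝ), g u = 0)
    (hgint : IntegrableOn (fun u => Real.exp (-φ * u) * |g u|) (Set.Ioi (0 : ℝ))) :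
    ∫ t in a..(0 : ℝ),
        Real.exp (Φ * t) * ∫ z in Set.Iic t, Real.exp (-φ * (t - z)) * g (-z)
      = (1 / (Φ - φ)) *
          ((∫ z in Set.Iic (0 : ℝ), Real.exp (φ * z) * g (-z))
            - (∫ z in a..(0 : ℝ), Real.exp (Φ * z) * g (-z))
            - Real.exp (Φ * a) * ∫ z in Set.Iic a, Real.exp (-φ * (a - z)) * g (-z)) := by
  have hg := integrableOn_exp_mul_of_exp_mul_abs hgm.aestronglyMeasurable hgint
  simpa [ha.le] using stmt10_general hne (a := a) (b := 0) (by simpa [ha.le] using hg)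
end

section
/- Let δ > 0 and 0 < Φ < φ with Φ ≠ φ, and let g : ℝ → ℝ be measurable, vanish on (−∞,0), and satisfy ∫_0^∞ e^{−φu}·|g(u)| du < ∞; set C = ∫_0^∞ e^{−φu}·g(u) du. Define G(t) = (δφ/Φ)·( g(−t) − (φ−Φ)·∫_{−∞}^t e^{−φ(t−z)}·g(−z) dz ) for t ≤ 0. Then for all reals x, b, y with y < b: ∫_{y−x}^{b−x} G(y−x−z)·e^{−Φz} dz = (δφ/Φ)·( C·e^{Φ(x−y)} − e^{Φ(x−b)}·∫_{−∞}^{y−b} e^{−φ(y−b−z)}·g(−z) dz ). -/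
open MeasureTheory Real Set Filter

/-! Substituting `s = z - (y - x)` turns the left-hand side into the integral over `[0, b - y]` of
`exp (-Φ * s) * (g s - (φ - Φ) * T s)`, up to a constant factor, where
`T s = ∫ u in Ioi s, exp (-φ * (u - s)) * g u`. Since `T' = φ * T - g` almost everywhere, this
integrand is minus the derivative of the absolutely continuous function `exp (-Φ * s) * T s`, and
the fundamental theorem of calculus leaves only the two boundary terms. -/

lemma absolutelyContinuousOnInterval_of_eqOn {X : Type*} [PseudoMetricSpace X] {f₁ f₂ : ℝ → X}
    {a b : ℝ} (hf₁ : AbsolutelyContinuousOnInterval f₁ a b) (heq : EqOn f₁ f₂ (uIcc a b)) :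
    AbsolutelyContinuousOnInterval f₂ a b := by
  rw [absolutelyContinuousOnInterval_iff] at hf₁ ⊢
  intro ε hε
  obtain ⟨η, hη, hsum⟩ := hf₁ ε hε
  refine ⟨η, hη, fun E hE hlength ↦ ?_⟩
  convert hsum E hE hlength using 3 with i hi
  · exact (heq (hE.1 i hi).1).symm
  · exact (heq (hE.1 i hi).2).symm

lemma integrableOn_exp_mul_of_abs {c : ℝ} {g : ℝ → ℝ} {s : Set ℝ}
    (hg : AEStronglyMeasurable g (volume.restrict s))
    (hint : IntegrableOn (fun u ↦ exp (c * u) * |g u|) s) :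
    IntegrableOn (fun u ↦ exp (c * u) * g u) s := by
  refine (integrable_norm_iff (by fun_prop)).1 ?_
  simpa only [IntegrableOn, norm_eq_abs, abs_mul, abs_exp] using hint

section TailIntegral

variable {a b : ℝ}

lemma absolutelyContinuousOnInterval_integral_Ioi {f : ℝ → ℝ}
    (hf : IntegrableOn f (Ioi a)) (hab : a ≤ b) :
    AbsolutelyContinuousOnInterval (fun x ↦ ∫ u in Ioi x, f u) a b := by
  have hconst : AbsolutelyContinuousOnInterval (fun _ ↦ ∫ u in Ioi a, f u) a b :=
    contDiffOn_const.absolutelyContinuousOnInterval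
  have hfi : IntervalIntegrable f volume a b :=
    (intervalIntegrable_iff_integrableOn_Ioc_of_le hab).2 (hf.mono_set Ioc_subset_Ioi_self)
  refine absolutelyContinuousOnInterval_of_eqOn
    (hconst.fun_sub (hfi.absolutelyContinuousOnInterval_intervalIntegral left_mem_uIcc))
    fun x hx ↦ ?_
  rw [uIcc_of_le hab] at hx
  rw [← intervalIntegral.integral_Ioi_sub_Ioi hf hx.1, sub_sub_cancel]

lemma ae_hasDerivAt_integral_Ioi {E : Type*} [NormedAddCommGroup E] [NormedSpace ℝ E]
    [CompleteSpace E] {f : ℝ → E} (hf : IntegrableOn f (Ioi a)) :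
    ∀ᵐ x, a < x → HasDerivAt (fun x ↦ ∫ u in Ioi x, f u) (-f x) x := by
  have hloc : LocallyIntegrable ((Ioi a).indicator f) :=
    (hf.integrable_indicator measurableSet_Ioi).locallyIntegrable
  filter_upwards [LocallyIntegrable.ae_hasDerivAt_integral hloc] with x hx hax
  have hderiv := (hx a).const_sub (∫ u in Ioi a, f u)
  rw [indicator_of_mem (mem_Ioi.2 hax)] at hderiv
  refine hderiv.congr_of_eventuallyEq ?_
  filter_upwards [lt_mem_nhds hax] with y hay
  have hindicator : ∫ u in a..y, (Ioi a).indicator f u = ∫ u in a..y, f u := by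
    rw [intervalIntegral.integral_of_le hay.le, intervalIntegral.integral_of_le hay.le]
    exact setIntegral_congr_fun measurableSet_Ioc fun u hu ↦ indicator_of_mem hu.1 f
  rw [hindicator, ← intervalIntegral.integral_Ioi_sub_Ioi hf hay.le, sub_sub_cancel]

end TailIntegral

/-- The Dickson–Hipp operator `T_r`, mapping `f` to its exponentially discounted tail integral.
The paper's `∫_{-∞}^t e^{-φ(t-z)} g(-z) dz` is `T_φ g (-t)`. The value is `0` wherever the integral
diverges. -/
noncomputable def dicksonHipp (r : ℝ) (f : ℝ → ℝ) (x : ℝ) : ℝ :=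
  ∫ u in Ioi x, exp (-r * (u - x)) * f u

namespace dicksonHipp

variable {r a b : ℝ} {f : ℝ → ℝ}

lemma apply_zero (r : ℝ) (f : ℝ → ℝ) :
    dicksonHipp r f 0 = ∫ u in Ioi 0, exp (-r * u) * f u := by
  simp only [dicksonHipp, sub_zero]

lemma eq_exp_mul_integral_Ioi (r : ℝ) (f : ℝ → ℝ) (x : ℝ) :
    dicksonHipp r f x = exp (r * x) * ∫ u in Ioi x, exp (-r * u) * f u := by
  rw [dicksonHipp, ← integral_const_mul]
  congr with u
  rw [← mul_assoc, ← exp_add]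
  ring_nf

lemma apply_neg_eq_integral_Iic (r : ℝ) (f : ℝ → ℝ) (t : ℝ) :
    dicksonHipp r f (-t) = ∫ z in Iic t, exp (-r * (t - z)) * f (-z) := by
  rw [dicksonHipp, ← integral_comp_neg_Iic]
  congr with z
  ring_nf

lemma absolutelyContinuousOnInterval
    (hf : IntegrableOn (fun u ↦ exp (-r * u) * f u) (Ioi a)) (hab : a ≤ b) :
    AbsolutelyContinuousOnInterval (dicksonHipp r f) a b := by
  have hexp : ContDiff ℝ 1 fun x ↦ exp (r * x) := by fun_prop
  rw [funext (eq_exp_mul_integral_Ioi r f)]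
  exact hexp.contDiffOn.absolutelyContinuousOnInterval.fun_mul
    (absolutelyContinuousOnInterval_integral_Ioi hf hab)

lemma ae_hasDerivAt (hf : IntegrableOn (fun u ↦ exp (-r * u) * f u) (Ioi a)) :
    ∀ᵐ x, a < x → HasDerivAt (dicksonHipp r f) (r * dicksonHipp r f x - f x) x := by
  filter_upwards [ae_hasDerivAt_integral_Ioi hf] with x htail hax
  have hexp : HasDerivAt (fun x ↦ exp (r * x)) (exp (r * x) * r) x := by
    simpa only [mul_one] using ((hasDerivAt_id' x).const_mul r).exp
  have hcancel : exp (r * x) * exp (-r * x) = 1 := by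
    rw [← exp_add, neg_mul, add_neg_cancel, exp_zero]
  rw [funext (eq_exp_mul_integral_Ioi r f)]
  refine (hexp.mul (htail hax)).congr_deriv ?_
  linear_combination (-f x) * hcancel

theorem integral_exp_mul_sub (s : ℝ)
    (hf : IntegrableOn (fun u ↦ exp (-r * u) * f u) (Ioi a)) (hab : a ≤ b) :
    ∫ x in a..b, exp (-s * x) * (f x - (r - s) * dicksonHipp r f x)
      = exp (-s * a) * dicksonHipp r f a - exp (-s * b) * dicksonHipp r f b := by
  have hexp (x : ℝ) : HasDerivAt (fun x ↦ exp (-s * x)) (exp (-s * x) * -s) x := by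
    simpa only [mul_one] using ((hasDerivAt_id' x).const_mul (-s)).exp
  have hexpDiff : ContDiff ℝ 1 fun x ↦ exp (-s * x) := by fun_prop
  have hac : AbsolutelyContinuousOnInterval (fun x ↦ exp (-s * x) * dicksonHipp r f x) a b :=
    hexpDiff.contDiffOn.absolutelyContinuousOnInterval.fun_mul
      (absolutelyContinuousOnInterval hf hab)
  have hderiv : ∀ᵐ x, x ∈ uIoc a b →
      exp (-s * x) * (f x - (r - s) * dicksonHipp r f x)
        = -deriv (fun x ↦ exp (-s * x) * dicksonHipp r f x) x := by
    filter_upwards [ae_hasDerivAt hf] with x hx hxab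
    rw [uIoc_of_le hab] at hxab
    rw [((hexp x).fun_mul (hx hxab.1)).deriv]
    ring
  rw [intervalIntegral.integral_congr_ae hderiv, intervalIntegral.integral_neg,
    hac.integral_deriv_eq_sub, neg_sub]

end dicksonHipp

theorem stmt11_general (κ Φ φ : ℝ) {g G : ℝ → ℝ}
    (hg : IntegrableOn (fun u ↦ exp (-φ * u) * g u) (Ioi 0))
    (hG : ∀ t ≤ 0, G t = κ * (g (-t)
      - (φ - Φ) * ∫ z in Iic t, exp (-φ * (t - z)) * g (-z)))
    (x : ℝ) {b y : ℝ} (hyb : y ≤ b) :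
    ∫ z in (y - x)..(b - x), G (y - x - z) * exp (-Φ * z)
      = κ * ((∫ u in Ioi 0, exp (-φ * u) * g u) * exp (Φ * (x - y))
          - exp (Φ * (x - b)) * ∫ z in Iic (y - b), exp (-φ * (y - b - z)) * g (-z)) := by
  let F (s : ℝ) := exp (-Φ * s) * (g s - (φ - Φ) * dicksonHipp φ g s)
  have hintegrand : EqOn (fun z ↦ G (y - x - z) * exp (-Φ * z))
      (fun z ↦ κ * exp (Φ * (x - y)) * F (z - (y - x))) (uIcc (y - x) (b - x)) := by
    intro z hz
    rw [uIcc_of_le (sub_le_sub_right hyb x)] at hz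
    have hshift : exp (-Φ * z) = exp (Φ * (x - y)) * exp (-Φ * (z - (y - x))) := by
      rw [← exp_add]
      ring_nf
    simp only [F]
    rw [hG _ (sub_nonpos.2 hz.1), ← dicksonHipp.apply_neg_eq_integral_Iic, neg_sub, hshift]
    ring
  have hend : exp (Φ * (x - b)) = exp (Φ * (x - y)) * exp (-Φ * (b - y)) := by
    rw [← exp_add]
    ring_nf
  rw [intervalIntegral.integral_congr hintegrand, intervalIntegral.integral_const_mul,
    intervalIntegral.integral_comp_sub_right F, sub_self, sub_sub_sub_cancel_right,
    dicksonHipp.integral_exp_mul_sub Φ hg (sub_nonneg.2 hyb), ← dicksonHipp.apply_zero,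
    ← dicksonHipp.apply_neg_eq_integral_Iic, neg_sub, hend, mul_zero, exp_zero]
  ring

/-- Identity (4.4) of the paper. -/
theorem stmt11 (δ Φ φ : ℝ) (hδ : 0 < δ) (hΦ : 0 < Φ) (hΦφ : Φ < φ) (hne : Φ ≠ φ)
    (g : ℝ → ℝ) (hgm : Measurable g)
    (hg0 : ∀ u < (0 : ℝ), g u = 0)
    (hgint : IntegrableOn (fun u => Real.exp (-φ * u) * |g u|) (Set.Ioi (0 : ℝ)))
    (C : ℝ) (hC : C = ∫ u in Set.Ioi (0 : ℝ), Real.exp (-φ * u) * g u)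
    (G : ℝ → ℝ)
    (hG : ∀ t ≤ (0 : ℝ),
      G t = (δ * φ / Φ) * (g (-t)
        - (φ - Φ) * ∫ z in Set.Iic t, Real.exp (-φ * (t - z)) * g (-z))) :
    ∀ x b y : ℝ, y < b →
      ∫ z in (y - x)..(b - x), G (y - x - z) * Real.exp (-Φ * z)
        = (δ * φ / Φ) * (C * Real.exp (Φ * (x - y))
            - Real.exp (Φ * (x - b))
              * ∫ z in Set.Iic (y - b), Real.exp (-φ * (y - b - z)) * g (-z)) := by
  intro x b y hyb
  have hg := integrableOn_exp_mul_of_abs hgm.aestronglyMeasurable hgint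
  exact hC ▸ stmt11_general _ Φ φ hg hG x hyb.le
end

section
/- Let q, δ > 0 and 0 < Φ < φ be real numbers. Let W : ℝ → ℝ vanish on (−∞,0), be continuous, nondecreasing and locally absolutely continuous on [0,∞) with a.e. derivative W′, satisfy e^{−φu}·W(u) → 0 as u → ∞ and ∫_0^∞ e^{−φu}·W(u) du = 1/(δφ). Define G(t) = (δφ/Φ)·( W′(−t) − (φ−Φ)·∫_{−∞}^t e^{−φ(t−z)}·W′(−z) dz ) for t ≤ 0, with W′ vanishing on (−∞,0). Then for all reals x, b, y with x ≤ y < b: (φ/Φ)·(1 − δ·W(0))·(q(φ−Φ)/(φδ))·e^{−Φ(y−x)} − ∫_{y−x}^{b−x} G(y−x−z)·(q(φ−Φ)/(φδ))·e^{−Φz} dz = (q(φ−Φ)/Φ)·e^{Φ(x−b)}·∫_{−∞}^{y−b} e^{−φ(y−b−z)}·W′(−z) dz. -/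
open MeasureTheory Real Set Filter

/-!
Let `H s = ∫ u in Ioi s, exp (-φ * (u - s)) * W' u`. Then `H' = φ H - W'` almost everywhere, so
`exp (-Φ * s) * G (-s) = (δ φ / Φ) exp (-Φ * s) (W' s - (φ - Φ) H s)` is the derivative of
`-(δ φ / Φ) exp (-Φ * s) H s`, and the integral on the left-hand side telescopes between `s = 0`
and `s = b - y`. Integrating the Laplace transform of `W` by parts gives `H 0 = 1 / δ - W 0`, so the
boundary term at `0` cancels the first term and the one at `b - y` is the right-hand side.
-/

section Primitive

variable {F f : ℝ → ℝ} {a b : ℝ}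

theorem integral_mul_add_mul_deriv_of_primitive {g : ℝ → ℝ} (hf : IntervalIntegrable f volume a b)
    (hF : ∀ x ∈ uIcc a b, F x = F a + ∫ t in a..x, f t)
    (hg : AbsolutelyContinuousOnInterval g a b) :
    ∫ x in a..b, (f x * g x + F x * deriv g x) = F b * g b - F a * g a := by
  let P : ℝ → ℝ := fun x ↦ F a + ∫ t in a..x, f t
  have hP : AbsolutelyContinuousOnInterval P a b :=
    (LipschitzWith.const (F a)).lipschitzOnWith.absolutelyContinuousOnInterval.add
      (hf.absolutelyContinuousOnInterval_intervalIntegral left_mem_uIcc)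
  have hFP : ∀ x ∈ uIcc a b, F x = P x := hF
  rw [hFP a left_mem_uIcc, hFP b right_mem_uIcc, ← hP.integral_deriv_mul_eq_sub hg]
  apply intervalIntegral.integral_congr_ae
  filter_upwards [hf.ae_hasDerivAt_integral] with x hx hx_mem
  have hx_mem' := uIoc_subset_uIcc hx_mem
  have hderiv : deriv P x = f x := ((hx hx_mem' a left_mem_uIcc).const_add (F a)).deriv
  rw [hderiv, hFP x hx_mem']

theorem integral_exp_mul_add_of_primitive (hf : IntervalIntegrable f volume a b)
    (hF : ∀ x ∈ uIcc a b, F x = F a + ∫ t in a..x, f t) (k : ℝ) :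
    ∫ x in a..b, exp (k * x) * (f x + k * F x) = exp (k * b) * F b - exp (k * a) * F a := by
  have hexp : AbsolutelyContinuousOnInterval (fun x ↦ exp (k * x)) a b :=
    ContDiffOn.absolutelyContinuousOnInterval (by fun_prop)
  have hderiv (x : ℝ) : deriv (fun x ↦ exp (k * x)) x = exp (k * x) * k := by
    simpa using ((hasDerivAt_id x).const_mul k).exp.deriv
  rw [mul_comm (exp _), mul_comm (exp _), ← integral_mul_add_mul_deriv_of_primitive hf hF hexp]
  simp only [hderiv]
  congr! 2
  ring

theorem ae_nonneg_of_monotoneOn_primitive (hf : IntervalIntegrable f volume a b)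
    (hF : ∀ x ∈ Icc a b, F x = F a + ∫ t in a..x, f t) (hmono : MonotoneOn F (Icc a b)) :
    ∀ᵐ x, x ∈ Ioo a b → 0 ≤ f x := by
  filter_upwards [hf.ae_hasDerivAt_integral] with x hx hx_mem
  have hIcc : Icc a b ∈ nhds x := Icc_mem_nhds hx_mem.1 hx_mem.2
  have hderiv_primitive : HasDerivAt (fun x ↦ F a + ∫ t in a..x, f t) (f x) x :=
    (hx (Icc_subset_uIcc (mem_of_mem_nhds hIcc)) a left_mem_uIcc).const_add (F a)
  have hderiv : HasDerivAt F (f x) x :=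
    hderiv_primitive.congr_of_eventuallyEq (eventually_of_mem hIcc hF)
  exact hderiv.hasDerivWithinAt.nonneg_of_monotoneOn
    (uniqueDiffWithinAt_of_mem_nhds (𝕜 := ℝ) hIcc).accPt hmono

end Primitive

section Laplace

variable {F f : ℝ → ℝ} {a p : ℝ}

theorem integral_exp_neg_mul_of_primitive {b : ℝ} (hf : IntervalIntegrable f volume a b)
    (hF : ∀ x ∈ uIcc a b, F x = F a + ∫ t in a..x, f t)
    (hFint : IntervalIntegrable (fun u ↦ exp (-p * u) * F u) volume a b) :
    ∫ u in a..b, exp (-p * u) * f u =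
      exp (-p * b) * F b - exp (-p * a) * F a + p * ∫ u in a..b, exp (-p * u) * F u := by
  have hfint : IntervalIntegrable (fun u ↦ exp (-p * u) * f u) volume a b :=
    hf.continuousOn_mul (by fun_prop)
  rw [← integral_exp_mul_add_of_primitive hf hF (-p), ← intervalIntegral.integral_const_mul,
    ← intervalIntegral.integral_add _ (hFint.const_mul p)]
  · congr! 2
    ring
  · convert hfint.sub (hFint.const_mul p) using 2
    ring

theorem tendsto_integral_exp_neg_mul_of_primitive
    (hf : ∀ b ≥ a, IntervalIntegrable f volume a b)
    (hF : ∀ b ≥ a, F b = F a + ∫ t in a..b, f t)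
    (hdecay : Tendsto (fun u ↦ exp (-p * u) * F u) atTop (nhds 0))
    (hFint : IntegrableOn (fun u ↦ exp (-p * u) * F u) (Ioi a)) :
    Tendsto (fun b ↦ ∫ u in a..b, exp (-p * u) * f u) atTop
      (nhds (p * (∫ u in Ioi a, exp (-p * u) * F u) - exp (-p * a) * F a)) := by
  have hlim := (hdecay.sub_const (exp (-p * a) * F a)).add
    ((intervalIntegral_tendsto_integral_Ioi a hFint tendsto_id).const_mul p)
  rw [zero_sub, neg_add_eq_sub] at hlim
  refine hlim.congr' ?_
  filter_upwards [eventually_ge_atTop a] with b hb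
  refine (integral_exp_neg_mul_of_primitive (hf b hb) (fun x hx ↦ hF x ?_) ?_).symm
  · exact (uIcc_of_le hb ▸ hx).1
  · exact (intervalIntegrable_iff_integrableOn_Ioc_of_le hb).2 (hFint.mono_set Ioc_subset_Ioi_self)

theorem integrableOn_exp_neg_mul_of_monotoneOn_primitive
    (hf : ∀ b ≥ a, IntervalIntegrable f volume a b)
    (hF : ∀ b ≥ a, F b = F a + ∫ t in a..b, f t) (hmono : MonotoneOn F (Ici a))
    (hdecay : Tendsto (fun u ↦ exp (-p * u) * F u) atTop (nhds 0))
    (hFint : IntegrableOn (fun u ↦ exp (-p * u) * F u) (Ioi a)) :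
    IntegrableOn (fun u ↦ exp (-p * u) * f u) (Ioi a) := by
  have hlim := tendsto_integral_exp_neg_mul_of_primitive hf hF hdecay hFint
  refine integrableOn_Ioi_of_intervalIntegral_norm_tendsto _ a (fun b ↦ ?_) tendsto_id
    (hlim.congr' ?_)
  · rcases le_total a b with hab | hba
    · exact ((hf b hab).continuousOn_mul (by fun_prop)).1
    · simp [Ioc_eq_empty_of_le hba]
  · filter_upwards [eventually_ge_atTop a] with b hab
    have hnonneg := ae_nonneg_of_monotoneOn_primitive (hf b hab) (fun x hx ↦ hF x hx.1)
      (hmono.mono Icc_subset_Ici_self)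
    apply intervalIntegral.integral_congr_ae
    filter_upwards [hnonneg, Measure.ae_ne volume b] with u hu hub hu_mem
    rw [uIoc_of_le hab] at hu_mem
    exact (norm_of_nonneg
      (mul_nonneg (exp_pos _).le (hu ⟨hu_mem.1, hu_mem.2.lt_of_ne hub⟩))).symm

end Laplace

/-- The tail of `w` beyond `s`, exponentially discounted at rate `p`. The integral
`∫ z in Iic t, exp (-p * (t - z)) * w (-z)` is its value at `-t`. -/
noncomputable def expTail (p : ℝ) (w : ℝ → ℝ) (s : ℝ) : ℝ :=
  ∫ u in Ioi s, exp (-p * (u - s)) * w u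

theorem expTail_eq_exp_mul_integral (p : ℝ) (w : ℝ → ℝ) (s : ℝ) :
    expTail p w s = exp (p * s) * ∫ u in Ioi s, exp (-p * u) * w u := by
  rw [expTail, ← integral_const_mul]
  congr! 2
  rw [← mul_assoc, ← exp_add]
  ring_nf

theorem integral_Iic_exp_mul_comp_neg (p : ℝ) (w : ℝ → ℝ) (t : ℝ) :
    ∫ z in Iic t, exp (-p * (t - z)) * w (-z) = expTail p w (-t) := by
  rw [expTail, ← integral_comp_neg_Iic]
  congr! 4
  ring

theorem expTail_of_primitive {F f : ℝ → ℝ} {a p : ℝ}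
    (hf : ∀ b ≥ a, IntervalIntegrable f volume a b)
    (hF : ∀ b ≥ a, F b = F a + ∫ t in a..b, f t)
    (hfint : IntegrableOn (fun u ↦ exp (-p * u) * f u) (Ioi a))
    (hdecay : Tendsto (fun u ↦ exp (-p * u) * F u) atTop (nhds 0))
    (hFint : IntegrableOn (fun u ↦ exp (-p * u) * F u) (Ioi a)) :
    expTail p f a = p * expTail p F a - F a := by
  have hparts := tendsto_nhds_unique (intervalIntegral_tendsto_integral_Ioi a hfint tendsto_id)
    (tendsto_integral_exp_neg_mul_of_primitive hf hF hdecay hFint)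
  have hexp : exp (p * a) * exp (-p * a) = 1 := by rw [← exp_add]; simp
  rw [expTail_eq_exp_mul_integral, expTail_eq_exp_mul_integral, hparts]
  linear_combination -F a * hexp

theorem integral_exp_neg_mul_sub_expTail {w : ℝ → ℝ} {a b p : ℝ} (r : ℝ)
    (hw : IntegrableOn (fun u ↦ exp (-p * u) * w u) (Ioi a)) (hab : a ≤ b) :
    ∫ s in a..b, exp (-r * s) * (w s - (p - r) * expTail p w s) =
      exp (-r * a) * expTail p w a - exp (-r * b) * expTail p w b := by
  let T : ℝ → ℝ := fun s ↦ ∫ u in Ioi s, exp (-p * u) * w u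
  have hwab : IntervalIntegrable (fun u ↦ exp (-p * u) * w u) volume a b :=
    (intervalIntegrable_iff_integrableOn_Ioc_of_le hab).2 (hw.mono_set Ioc_subset_Ioi_self)
  have hT : ∀ s ∈ uIcc a b, T s = T a + ∫ u in a..s, -(exp (-p * u) * w u) := by
    intro s hs
    rw [intervalIntegral.integral_neg,
      ← intervalIntegral.integral_Ioi_sub_Ioi hw (uIcc_of_le hab ▸ hs).1]
    ring
  have htail (s : ℝ) : exp (-r * s) * expTail p w s = exp ((p - r) * s) * T s := by
    rw [expTail_eq_exp_mul_integral, ← mul_assoc, ← exp_add]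
    congr 2
    ring
  rw [htail, htail, ← neg_sub (_ * T b), ← integral_exp_mul_add_of_primitive hwab.neg hT,
    ← intervalIntegral.integral_neg]
  congr! 2 with s
  rw [Pi.neg_apply]
  have hexp : exp (-r * s) = exp ((p - r) * s) * exp (-p * s) := by rw [← exp_add]; ring_nf
  linear_combination -(p - r) * htail s + w s * hexp

theorem integral_comp_sub_mul_exp (g : ℝ → ℝ) (C r a b : ℝ) :
    ∫ z in a..b, g (a - z) * (C * exp (-r * z)) =
      C * exp (-r * a) * ∫ s in 0..(b - a), exp (-r * s) * g (-s) := by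
  rw [← intervalIntegral.integral_const_mul, ← sub_self a,
    ← intervalIntegral.integral_comp_sub_right
      (fun s ↦ C * exp (-r * a) * (exp (-r * s) * g (-s)))]
  congr! 2 with z
  have hexp : exp (-r * z) = exp (-r * a) * exp (-r * (z - a)) := by rw [← exp_add]; ring_nf
  rw [neg_sub, hexp]
  ring

theorem stmt14_general (q δ Φ φ : ℝ) (hδ : δ ≠ 0) (hΦ : Φ ≠ 0) (hφ : φ ≠ 0) (W W' : ℝ → ℝ)
    (hW'int : ∀ b ≥ (0 : ℝ), IntervalIntegrable W' volume 0 b)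
    (hFTC : ∀ b ≥ (0 : ℝ), W b = W 0 + ∫ t in (0 : ℝ)..b, W' t)
    (hW'exp : IntegrableOn (fun u ↦ exp (-φ * u) * W' u) (Ioi (0 : ℝ)))
    (hWdecay : Tendsto (fun u ↦ exp (-φ * u) * W u) atTop (nhds 0))
    (hWint : IntegrableOn (fun u ↦ exp (-φ * u) * W u) (Ioi (0 : ℝ)))
    (hWlap : ∫ u in Ioi (0 : ℝ), exp (-φ * u) * W u = 1 / (δ * φ))
    (G : ℝ → ℝ)
    (hG : ∀ t ≤ (0 : ℝ),
      G t = (δ * φ / Φ) * (W' (-t) - (φ - Φ) * ∫ z in Iic t, exp (-φ * (t - z)) * W' (-z)))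
    (x b y : ℝ) (hyb : y ≤ b) :
    (φ / Φ) * (1 - δ * W 0) * ((q * (φ - Φ) / (φ * δ)) * exp (-Φ * (y - x)))
        - ∫ z in (y - x)..(b - x), G (y - x - z) * ((q * (φ - Φ) / (φ * δ)) * exp (-Φ * z))
      = (q * (φ - Φ) / Φ) * exp (Φ * (x - b))
          * ∫ z in Iic (y - b), exp (-φ * (y - b - z)) * W' (-z) := by
  have hyb_nonneg : 0 ≤ b - y := sub_nonneg.2 hyb
  have htail_zero : expTail φ W' 0 = 1 / δ - W 0 := by
    rw [expTail_of_primitive hW'int hFTC hW'exp hWdecay hWint, expTail_eq_exp_mul_integral φ W,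
      hWlap]
    simp only [mul_zero, exp_zero]
    field_simp
  have htelescope : ∫ s in 0..(b - y), exp (-Φ * s) * G (-s) =
      δ * φ / Φ * (expTail φ W' 0 - exp (-Φ * (b - y)) * expTail φ W' (b - y)) := by
    have hint := integral_exp_neg_mul_sub_expTail Φ hW'exp hyb_nonneg
    rw [mul_zero, exp_zero, one_mul] at hint
    rw [← hint, ← intervalIntegral.integral_const_mul]
    refine intervalIntegral.integral_congr fun s hs ↦ ?_
    simp only [hG (-s) (neg_nonpos.2 (uIcc_of_le hyb_nonneg ▸ hs).1), integral_Iic_exp_mul_comp_neg,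
      neg_neg]
    ring
  have hexp : exp (Φ * (x - b)) = exp (-Φ * (y - x)) * exp (-Φ * (b - y)) := by
    rw [← exp_add]; ring_nf
  rw [integral_comp_sub_mul_exp, sub_sub_sub_cancel_right, htelescope, htail_zero,
    integral_Iic_exp_mul_comp_neg, neg_sub, hexp]
  field_simp
  ring

/-- Identity (4.5) of the paper: the case `x ≤ y < b`. -/
theorem stmt14 (q δ Φ φ : ℝ) (hq : 0 < q) (hδ : 0 < δ) (hΦ : 0 < Φ) (hΦφ : Φ < φ)
    (W W' : ℝ → ℝ)
    (hW0 : ∀ u < (0 : ℝ), W u = 0)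
    (hWc : ContinuousOn W (Set.Ici (0 : ℝ)))
    (hWmono : Monotone W)
    (hW'meas : Measurable W')
    (hW'0 : ∀ u < (0 : ℝ), W' u = 0)
    (hW'int : ∀ b : ℝ, IntervalIntegrable W' MeasureTheory.volume 0 b)
    (hFTC : ∀ b ≥ (0 : ℝ), W b = W 0 + ∫ t in (0 : ℝ)..b, W' t)
    (hWdecay : Filter.Tendsto (fun u => Real.exp (-φ * u) * W u) Filter.atTop (nhds 0))
    (hWint : IntegrableOn (fun u => Real.exp (-φ * u) * W u) (Set.Ioi (0 : ℝ)))
    (hWlap : ∫ u in Set.Ioi (0 : ℝ), Real.exp (-φ * u) * W u = 1 / (δ * φ))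
    (G : ℝ → ℝ)
    (hG : ∀ t ≤ (0 : ℝ),
      G t = (δ * φ / Φ) * (W' (-t)
        - (φ - Φ) * ∫ z in Set.Iic t, Real.exp (-φ * (t - z)) * W' (-z))) :
    ∀ x b y : ℝ, x ≤ y → y < b →
      (φ / Φ) * (1 - δ * W 0) * ((q * (φ - Φ) / (φ * δ)) * Real.exp (-Φ * (y - x)))
        - ∫ z in (y - x)..(b - x),
            G (y - x - z) * ((q * (φ - Φ) / (φ * δ)) * Real.exp (-Φ * z))
        = (q * (φ - Φ) / Φ) * Real.exp (Φ * (x - b))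
            * ∫ z in Set.Iic (y - b), Real.exp (-φ * (y - b - z)) * W' (-z) :=
  fun x b y _ hyb ↦ stmt14_general q δ Φ φ hδ.ne' hΦ.ne' (hΦ.trans hΦφ).ne' W W'
    (fun b _ ↦ hW'int b) hFTC
    (integrableOn_exp_neg_mul_of_monotoneOn_primitive (fun b _ ↦ hW'int b) hFTC
      (hWmono.monotoneOn _) hWdecay hWint)
    hWdecay hWint hWlap G hG x b y hyb.le
end
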